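/- arXiv:2507.06324 — 6 statements merged into one kernel-verified Lean document; each statement's English description precedes it below -/
import Mathlib

section
/- Let R be a commutative ring, D, p ∈ ℕ, and let A : (Fin p → Fin D) → R be totally antisymmetric, i.e. A i = 0 whenever i : Fin p → Fin D is not injective, and A (i ∘ σ) = Equiv.Perm.sign σ • A i for every permutation σ of Fin p. Then for every j : Fin p → Fin D, ∑_{i : Fin p → Fin D} δ(j,i) · A i = p! · A j. -/
/-- Generalized Kronecker delta: the determinant of the `p × p` matrix whose
`(a,b)` entry is `1` if `j a = i b` and `0` otherwise. -/
def gdelta (R : Type*) [CommRing R] {p D : ℕ} (j i : Fin p → Fin D) : R :=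
  Matrix.det (Matrix.of fun a b => if j a = i b then (1 : R) else 0)

/-- Leibniz expansion of the generalized Kronecker delta. -/
theorem gdelta_eq_sum_perm (R : Type*) [CommRing R] {p D : ℕ} (j i : Fin p → Fin D) :
    gdelta R j i =
      ∑ σ : Equiv.Perm (Fin p), if j ∘ σ = i then ((Equiv.Perm.sign σ : ℤ) : R) else 0 := by
  rw [gdelta, Matrix.det_apply']
  refine Finset.sum_congr rfl fun σ _ => ?_
  simp only [Matrix.of_apply, Fintype.prod_ite_zero, Finset.prod_const_one, mul_ite, mul_one,
    mul_zero, funext_iff, Function.comp_apply]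

/-- Contracting the generalized Kronecker delta with a totally antisymmetric
tensor `A` reproduces `p! • A`. -/
theorem gdelta_contract_antisymm (R : Type*) [CommRing R] (D p : ℕ)
    (A : (Fin p → Fin D) → R)
    (hA₀ : ∀ i : Fin p → Fin D, ¬ Function.Injective i → A i = 0)
    (hAσ : ∀ (i : Fin p → Fin D) (σ : Equiv.Perm (Fin p)),
      A (i ∘ σ) = (Equiv.Perm.sign σ : ℤ) • A i)
    (j : Fin p → Fin D) :
    ∑ i : Fin p → Fin D, gdelta R j i * A i = (p.factorial : R) * A j := by
  simp only [gdelta_eq_sum_perm, Finset.sum_mul, ite_mul, zero_mul]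
  rw [Finset.sum_comm]
  have sign_mul_apply (σ : Equiv.Perm (Fin p)) :
      ((Equiv.Perm.sign σ : ℤ) : R) * A (j ∘ σ) = A j := by
    rw [hAσ, zsmul_eq_mul, ← mul_assoc, ← Int.cast_mul, Int.units_coe_mul_self, Int.cast_one,
      one_mul]
  simp [sign_mul_apply, Fintype.card_perm]
end

section
/- Let D, p, q ∈ ℕ with D = p + q. For all k, j : Fin q → Fin D, the partial trace of the generalized Kronecker delta over the first p index pairs satisfies ∑_{i : Fin p → Fin D} δ(i ⊕ k, i ⊕ j) = p! · δ(k, j), as an identity in ℤ (or any commutative ring). (In unit-weight conventions this is δ^{i₁⋯i_p k₁⋯k_q}_{i₁⋯i_p j₁⋯j_q} = (p! q!/D!) δ^{k₁⋯k_q}_{j₁⋯j_q}.) -/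
/-- Relabelling both index tuples along the same bijection leaves the delta unchanged. -/
theorem gdelta_comp_equiv (R : Type*) [CommRing R] {m n D : ℕ} (e : Fin m ≃ Fin n)
    (k j : Fin n → Fin D) : gdelta R (k ∘ e) (j ∘ e) = gdelta R k j :=
  Matrix.det_submatrix_equiv_self e (Matrix.of fun a b => if k a = j b then (1 : R) else 0)

/-- Permuting the second index tuple multiplies the delta by the sign of the permutation. -/
theorem gdelta_comp_perm_right (R : Type*) [CommRing R] {n D : ℕ} (e : Equiv.Perm (Fin n))
    (k j : Fin n → Fin D) :
    gdelta R k (j ∘ e) = ((Equiv.Perm.sign e : ℤ) : R) * gdelta R k j :=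
  Matrix.det_permute' e (Matrix.of fun a b => if k a = j b then (1 : R) else 0)

/-- Laplace expansion of `δ(x ⊕ k, y ⊕ j)` along the row of `x`. -/
theorem gdelta_cons_cons (R : Type*) [CommRing R] {n D : ℕ} (x y : Fin D)
    (k : Fin (n + 1) → Fin D) (j : Fin (n + 1) → Fin D) :
    gdelta R (Fin.cons x k : Fin (n + 2) → Fin D) (Fin.cons y j) =
      (if x = y then gdelta R k j else 0) +
        ∑ b : Fin (n + 1), (-1) ^ (b.val + 1) *
          (if x = j b then gdelta R k (Fin.cons y (j ∘ b.succAbove)) else 0) := by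
  rw [gdelta, Matrix.det_succ_row_zero, Fin.sum_univ_succ]
  congr 1
  · simp [gdelta, Matrix.submatrix, ite_mul]
  · refine Finset.sum_congr rfl fun b _ => ?_
    have hcols : (Fin.cons y j : Fin (n + 2) → Fin D) ∘ b.succ.succAbove =
        Fin.cons y (j ∘ b.succAbove) := by
      ext c
      refine Fin.cases ?_ (fun c => ?_) c <;> simp
    rw [← hcols]
    simp [gdelta, Matrix.submatrix, ite_mul]

/-- Tracing one index pair out of the delta multiplies it by `D - n`. -/
theorem sum_gdelta_cons (R : Type*) [CommRing R] {n D : ℕ} (k j : Fin n → Fin D) :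
    ∑ x : Fin D, gdelta R (Fin.cons x k : Fin (n + 1) → Fin D) (Fin.cons x j) =
      ((D : R) - n) * gdelta R k j := by
  cases n with
  | zero => simp [gdelta]
  | succ n =>
    have hcycle (b : Fin (n + 1)) :
        (Fin.cons (j b) (j ∘ b.succAbove) : Fin (n + 1) → Fin D) =
          j ∘ b.cycleRange.symm := by
      ext c
      refine Fin.cases ?_ (fun c => ?_) c <;> simp
    have hterm (b : Fin (n + 1)) :
        (-1 : R) ^ (b.val + 1) * gdelta R k (Fin.cons (j b) (j ∘ b.succAbove)) =
          -gdelta R k j := by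
      rw [hcycle, gdelta_comp_perm_right, Equiv.Perm.sign_symm, Fin.sign_cycleRange]
      push_cast
      rw [← mul_assoc, ← pow_add, Odd.neg_one_pow ⟨b.val, by ring⟩, neg_one_mul]
    simp_rw [gdelta_cons_cons, Finset.sum_add_distrib]
    rw [Finset.sum_comm]
    simp only [mul_ite, mul_zero, Finset.sum_ite_eq', Finset.mem_univ, if_true, hterm]
    simp
    ring

/-- The partial trace over `p` index pairs in an arbitrary dimension `D`. -/
theorem sum_gdelta_append (R : Type*) [CommRing R] {D q : ℕ} (p : ℕ) (k j : Fin q → Fin D) :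
    ∑ i : Fin p → Fin D, gdelta R (Fin.append i k) (Fin.append i j) =
      (∏ t ∈ Finset.range p, ((D : R) - q - t)) * gdelta R k j := by
  induction p with
  | zero =>
    have happend (i : Fin 0 → Fin D) (u : Fin q → Fin D) :
        Fin.append i u = u ∘ finCongr (Nat.zero_add q) := by
      rw [Subsingleton.elim i Fin.elim0, Fin.elim0_append]
      rfl
    simp [happend, gdelta_comp_equiv]
  | succ p ih =>
    have happend (x : Fin D) (i : Fin p → Fin D) (u : Fin q → Fin D) :
        Fin.append (Fin.cons x i : Fin (p + 1) → Fin D) u =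
          (Fin.cons x (Fin.append i u) : Fin (p + q + 1) → Fin D) ∘
            finCongr (Nat.add_right_comm p 1 q) := by
      rw [Fin.append_cons]
      rfl
    rw [← (Fin.consEquiv fun _ => Fin D).sum_comp, Fintype.sum_prod_type_right]
    change ∑ i : Fin p → Fin D, ∑ x : Fin D,
      gdelta R (Fin.append (Fin.cons x i : Fin (p + 1) → Fin D) k)
        (Fin.append (Fin.cons x i : Fin (p + 1) → Fin D) j) = _
    simp only [happend, gdelta_comp_equiv, sum_gdelta_cons]
    rw [← Finset.mul_sum, ih, Finset.prod_range_succ]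
    push_cast
    ring

/-- Partial trace of the generalized Kronecker delta over the first `p` index pairs:
`∑ i, δ(i ⊕ k, i ⊕ j) = p! · δ(k, j)` in dimension `D = p + q`. -/
theorem gdelta_partial_trace (D p q : ℕ) (hD : D = p + q)
    (k j : Fin q → Fin D) :
    ∑ i : Fin p → Fin D, gdelta ℤ (Fin.append i k) (Fin.append i j)
      = (p.factorial : ℤ) * gdelta ℤ k j := by
  subst hD
  rw [sum_gdelta_append, ← Nat.descFactorial_self, Nat.descFactorial_eq_prod_range]
  push_cast
  congr 1
  refine Finset.prod_congr rfl fun t ht => ?_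
  rw [Nat.cast_sub (Finset.mem_range.mp ht).le]
  ring
end

section
/- Let R be a commutative ring, D, p, q ∈ ℕ with D = p + q, and A : Matrix (Fin D) (Fin D) R. Then for all n, k : Fin q → Fin D: ∑_{i : Fin p → Fin D} ∑_{m : Fin p → Fin D} ∑_{j : Fin q → Fin D} ε(i ⊕ j) · ε(m ⊕ n) · (∏_{a : Fin p} A (i a) (m a)) · (∏_{b : Fin q} A (j b) (k b)) = p! · det A · δ(n, k). (In unit-weight conventions this is ε_{i₁⋯i_p j₁⋯j_q} ε_{m₁⋯m_p n₁⋯n_q} A_{i₁m₁}⋯A_{i_p m_p} A_{j₁k₁}⋯A_{j_q k_q} = p! q! det A · δ^{k₁⋯k_q}_{n₁⋯n_q}.) -/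
/-- Levi-Civita symbol: the determinant of the `D × D` matrix whose `(a,b)` entry is
`1` if `i a = b` and `0` otherwise. -/
def eps (R : Type*) [CommRing R] {D : ℕ} (i : Fin D → Fin D) : R :=
  Matrix.det (Matrix.of fun a b => if i a = b then (1 : R) else 0)

open Matrix in
/-- The full contraction of the Levi-Civita symbol with columns `c` of `A`. -/
theorem sum_eps_mul_prod (R : Type*) [CommRing R] {D : ℕ} (A : Matrix (Fin D) (Fin D) R)
    (c : Fin D → Fin D) :
    ∑ l : Fin D → Fin D, eps R l * ∏ a, A (l a) (c a) = A.det * eps R c := by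
  have hmul : (of fun a b => if c a = b then (1 : R) else 0) * Aᵀ = of fun a b => A b (c a) := by
    ext a b
    simp [mul_apply]
  have hrow : (of fun a b => A b (c a) : Matrix (Fin D) (Fin D) R)
      = fun a => ∑ x, A x (c a) • (Pi.single x 1 : Fin D → R) := by
    ext a b
    simp [Finset.sum_apply, Pi.single_apply]
  rw [mul_comm, ← det_transpose A, eps, ← det_mul, hmul, hrow]
  change _ = detRowAlternating.toMultilinearMap _
  rw [MultilinearMap.map_sum]
  refine Finset.sum_congr rfl fun l _ => ?_
  rw [MultilinearMap.map_smul_univ, smul_eq_mul, mul_comm, eps]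
  congr 2
  ext a b
  simp [Pi.single_apply, eq_comm]

/-- The product of two Levi-Civita symbols is a generalized Kronecker delta. -/
theorem eps_mul_eps (R : Type*) [CommRing R] {D : ℕ} (u v : Fin D → Fin D) :
    eps R u * eps R v = gdelta R u v := by
  rw [eps, eps, gdelta,
    ← Matrix.det_transpose (Matrix.of fun a b => if v a = b then (1 : R) else 0),
    ← Matrix.det_mul]
  congr 1
  ext a b
  simp [Matrix.mul_apply, eq_comm]

/-- The generalized Kronecker delta vanishes when an upper index is repeated. -/
theorem gdelta_eq_zero_of_not_injective (R : Type*) [CommRing R] {p D : ℕ} {u : Fin p → Fin D}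
    (v : Fin p → Fin D) (hu : ¬ Function.Injective u) : gdelta R u v = 0 := by
  simp only [Function.Injective, not_forall] at hu
  obtain ⟨a, b, hab, hne⟩ := hu
  exact Matrix.det_zero_of_row_eq hne (by ext c; simp [hab])

/-- A common block of indices, disjoint from the remaining upper ones, can be dropped. -/
theorem gdelta_append_of_injective (R : Type*) [CommRing R] {p q D : ℕ} (m : Fin p → Fin D)
    (n k : Fin q → Fin D) (h : Function.Injective (Fin.append m n)) :
    gdelta R (Fin.append m n) (Fin.append m k) = gdelta R n k := by
  obtain ⟨hm, -, hmn⟩ := Fin.append_injective_iff.1 h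
  rw [gdelta, ← Matrix.det_submatrix_equiv_self finSumFinEquiv]
  have hblocks : (Matrix.of fun a b => if Fin.append m n a = Fin.append m k b then (1 : R) else 0
      ).submatrix finSumFinEquiv finSumFinEquiv
      = Matrix.fromBlocks 1 (Matrix.of fun a b => if m a = k b then (1 : R) else 0) 0
        (Matrix.of fun a b => if n a = k b then (1 : R) else 0) := by
    ext (a | a) (b | b)
    · simp [Matrix.one_apply, hm.eq_iff]
    · simp
    · simp [(hmn b a).symm]
    · simp
  rw [hblocks, Matrix.det_fromBlocks_zero₂₁, Matrix.det_one, one_mul, gdelta]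

/-- There are `p!` ways to extend an injective `q`-tuple in `Fin (p + q)` by `p` entries
to an injective tuple. -/
theorem card_filter_injective_append (p q : ℕ) {n : Fin q → Fin (p + q)}
    (hn : Function.Injective n) :
    (Finset.univ.filter fun m : Fin p → Fin (p + q) =>
      Function.Injective (Fin.append m n)).card = p.factorial := by
  classical
  have hcard : Fintype.card {x // x ∉ Set.range n} = p := by
    have hrange : Fintype.card {x // x ∈ Set.range n} = q := by
      rw [Set.card_range_of_injective hn, Fintype.card_fin]
    rw [Fintype.card_subtype_compl, hrange, Fintype.card_fin, Nat.add_sub_cancel]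
  calc _ = (Finset.univ : Finset (Fin p ↪ {x // x ∉ Set.range n})).card := by
        symm
        refine Finset.card_bij (fun f _ a => (f a : Fin (p + q))) ?_ ?_ ?_
        · intro f _
          simp only [Finset.mem_filter, Finset.mem_univ, true_and]
          exact Fin.append_injective_iff.2 ⟨Subtype.val_injective.comp f.injective, hn,
            fun a b h => (f a).2 ⟨b, h.symm⟩⟩
        · intro f _ g _ h
          ext a
          exact congrArg Fin.val (congrFun h a)
        · intro m hm
          obtain ⟨hm, -, hmn⟩ := Fin.append_injective_iff.1 (Finset.mem_filter.1 hm).2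
          exact ⟨⟨fun a => ⟨m a, fun ⟨b, h⟩ => hmn a b h.symm⟩,
            fun a b h => hm (congrArg Subtype.val h)⟩, Finset.mem_univ _, rfl⟩
    _ = p.factorial := by
        rw [Finset.card_univ, Fintype.card_embedding_eq, hcard, Fintype.card_fin,
          Nat.descFactorial_self]

/-- Contraction of two Levi-Civita symbols over their first `p` indices. -/
theorem sum_eps_append_mul_eps_append (R : Type*) [CommRing R] (p q : ℕ)
    (n k : Fin q → Fin (p + q)) :
    ∑ m : Fin p → Fin (p + q), eps R (Fin.append m n) * eps R (Fin.append m k)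
      = (p.factorial : R) * gdelta R n k := by
  classical
  have hterm (m : Fin p → Fin (p + q)) :
      eps R (Fin.append m n) * eps R (Fin.append m k)
        = if Function.Injective (Fin.append m n) then gdelta R n k else 0 := by
    rw [eps_mul_eps]
    split_ifs with h
    · exact gdelta_append_of_injective R m n k h
    · exact gdelta_eq_zero_of_not_injective R _ h
  simp_rw [hterm]
  by_cases hn : Function.Injective n
  · rw [← Finset.sum_filter, Finset.sum_const, nsmul_eq_mul]
    congr 2
    convert card_filter_injective_append p q hn
  · simp [gdelta_eq_zero_of_not_injective R k hn]

/-- Theorem 6 of the paper: contracting two Levi-Civita symbols with `D = p + q`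
copies of a matrix `A` produces `p! · det A · δ(n, k)`. -/
theorem eps_eps_contract_matrix (R : Type*) [CommRing R] (p q : ℕ)
    (A : Matrix (Fin (p + q)) (Fin (p + q)) R) (n k : Fin q → Fin (p + q)) :
    ∑ i : Fin p → Fin (p + q), ∑ m : Fin p → Fin (p + q), ∑ j : Fin q → Fin (p + q),
        eps R (Fin.append i j) * eps R (Fin.append m n)
          * (∏ a : Fin p, A (i a) (m a)) * (∏ b : Fin q, A (j b) (k b))
      = (p.factorial : R) * A.det * gdelta R n k := by
  have hinner (m : Fin p → Fin (p + q)) :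
      ∑ i : Fin p → Fin (p + q), ∑ j : Fin q → Fin (p + q),
        eps R (Fin.append i j) * eps R (Fin.append m n)
          * (∏ a : Fin p, A (i a) (m a)) * (∏ b : Fin q, A (j b) (k b))
      = A.det * (eps R (Fin.append m n) * eps R (Fin.append m k)) := by
    rw [mul_left_comm, ← sum_eps_mul_prod, ← (Fin.appendEquiv p q).sum_comp,
      Fintype.sum_prod_type, Finset.mul_sum]
    refine Finset.sum_congr rfl fun i _ => ?_
    rw [Finset.mul_sum]
    refine Finset.sum_congr rfl fun j _ => ?_
    simp only [Fin.appendEquiv, Equiv.coe_fn_mk, Fin.prod_univ_add, Fin.append_left,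
      Fin.append_right]
    ring
  rw [Finset.sum_comm, Finset.sum_congr rfl fun m _ => hinner m, ← Finset.mul_sum,
    sum_eps_append_mul_eps_append]
  ring
end

section
/- (Adjugate/cofactor identity, eq. (4.14) of the paper with A = g⁻¹.) Let R be a commutative ring, D ≥ 1, and A : Matrix (Fin D) (Fin D) R. Then for all j, r : Fin D: ∑_{a : Fin (D−1) → Fin D} ∑_{b : Fin (D−1) → Fin D} ε(j ::ᵥ a) · ε(r ::ᵥ b) · ∏_{m : Fin (D−1)} A (a m) (b m) = (D−1)! · (adjugate A) r j. In particular, when A = g⁻¹ for a symmetric invertible matrix g over a field, the right-hand side equals (D−1)! · det(g⁻¹) · g j r. -/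
open Matrix

/-- The Levi-Civita symbol gives the expansion of the determinant over all index tuples. -/
theorem sum_eps_mul_prod_s7 {R : Type*} [CommRing R] {n : ℕ} (M : Matrix (Fin n) (Fin n) R) :
    ∑ i : Fin n → Fin n, eps R i * ∏ k, M k (i k) = M.det := by
  have hM : M = fun k => ∑ l, M k l • (Pi.single l 1 : Fin n → R) := by
    ext k l
    simp [Finset.sum_apply, Pi.single_apply]
  have h := (detRowAlternating (R := R) (n := Fin n)).toMultilinearMap.map_sum
    (fun k l => M k l • (Pi.single l 1 : Fin n → R))
  conv_rhs => rw [hM]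
  refine Eq.trans ?_ h.symm
  refine Finset.sum_congr rfl fun i _ => ?_
  rw [MultilinearMap.map_smul_univ, smul_eq_mul, mul_comm]
  refine congrArg (_ * ·) (congrArg det ?_)
  ext a b
  simp [Pi.single_apply, eq_comm]

/-- Contracting all but the first index of the Levi-Civita symbol with the rows of `N` gives a
determinant whose first row is a basis vector. -/
theorem sum_eps_vecCons_mul_prod {R : Type*} [CommRing R] {n : ℕ} (r : Fin (n + 1))
    (N : Matrix (Fin n) (Fin (n + 1)) R) :
    ∑ b : Fin n → Fin (n + 1), eps R (vecCons r b) * ∏ m, N m (b m) =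
      (of (vecCons (Pi.single r 1) N)).det := by
  rw [← sum_eps_mul_prod_s7, ← (Fin.consEquiv fun _ => Fin (n + 1)).sum_comp,
    Fintype.sum_prod_type, Finset.sum_eq_single r]
  · simp [Fin.prod_univ_succ, Fin.consEquiv]
    rfl
  · intro s _ hs
    simp [Fin.prod_univ_succ, Fin.consEquiv, hs]
  · simp

theorem eps_eq_zero_of_not_injective {R : Type*} [CommRing R] {n : ℕ} {i : Fin n → Fin n}
    (hi : ¬ Function.Injective i) : eps R i = 0 := by
  simp only [Function.Injective, not_forall] at hi
  obtain ⟨a, b, hab, hne⟩ := hi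
  exact det_zero_of_row_eq hne (by ext; simp [hab])

/-- Selecting the rows of `M` along `i` scales the determinant by the Levi-Civita symbol. -/
theorem det_submatrix_id_eq_eps_mul {R : Type*} [CommRing R] {n : ℕ} (i : Fin n → Fin n)
    (M : Matrix (Fin n) (Fin n) R) : (M.submatrix i id).det = eps R i * M.det := by
  rw [eps, ← det_mul]
  congr 1
  ext a b
  simp [mul_apply]

theorem eps_mul_self_of_injective {R : Type*} [CommRing R] {n : ℕ} {i : Fin n → Fin n}
    (hi : Function.Injective i) : eps R i * eps R i = 1 := by
  let σ : Equiv.Perm (Fin n) := Equiv.ofBijective i (Finite.injective_iff_bijective.mp hi)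
  have h : eps R i = ((Equiv.Perm.sign σ : ℤ) : R) := by
    have := det_permute σ (1 : Matrix (Fin n) (Fin n) R)
    rw [det_one, mul_one] at this
    rw [← this, ← mul_one (eps R i), ← det_one (n := Fin n), ← det_submatrix_id_eq_eps_mul]
    rfl
  rw [h, ← Int.cast_mul, ← Units.val_mul, Int.units_mul_self]
  simp

theorem card_injective_vecCons {n : ℕ} (j : Fin (n + 1)) :
    Fintype.card {a : Fin n → Fin (n + 1) // Function.Injective (vecCons j a)} = n.factorial := by
  let e : {a : Fin n → Fin (n + 1) // Function.Injective (vecCons j a)} ≃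
      (Fin n ↪ {x : Fin (n + 1) // x ≠ j}) :=
    { toFun := fun a => ⟨fun m => ⟨a.1 m, fun h => (Fin.cons_injective_iff.mp a.2).1 ⟨m, h⟩⟩,
        fun _ _ h => (Fin.cons_injective_iff.mp a.2).2 (congrArg Subtype.val h)⟩
      invFun := fun f => ⟨fun m => f m, Fin.cons_injective_iff.mpr
        ⟨fun ⟨m, h⟩ => (f m).2 h, Subtype.val_injective.comp f.injective⟩⟩
      left_inv := fun _ => rfl
      right_inv := fun _ => rfl }
  rw [Fintype.card_congr e, Fintype.card_embedding_eq]
  simp [Fintype.card_subtype_compl, Nat.descFactorial_self]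

/-- Adjugate/cofactor identity (eq. (4.14) of the paper): in dimension `D + 1 ≥ 1`,
contracting two Levi-Civita symbols over all but their first index with `D` copies
of a matrix `A` yields `D! · adjugate A`. -/
theorem eps_eps_adjugate (R : Type*) [CommRing R] (D : ℕ)
    (A : Matrix (Fin (D + 1)) (Fin (D + 1)) R) (j r : Fin (D + 1)) :
    ∑ a : Fin D → Fin (D + 1), ∑ b : Fin D → Fin (D + 1),
        eps R (Matrix.vecCons j a) * eps R (Matrix.vecCons r b)
          * ∏ m : Fin D, A (a m) (b m)
      = (D.factorial : R) * A.adjugate r j := by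
  have key (a : Fin D → Fin (D + 1)) :
      ∑ b : Fin D → Fin (D + 1), eps R (vecCons j a) * eps R (vecCons r b)
          * ∏ m : Fin D, A (a m) (b m) =
        if Function.Injective (vecCons j a) then A.adjugate r j else 0 := by
    simp_rw [mul_assoc]
    rw [← Finset.mul_sum]
    split_ifs with ha
    · have hrows : of (vecCons (Pi.single r 1) fun m => A (a m)) =
          (A.updateRow j (Pi.single r 1)).submatrix (vecCons j a) id := by
        ext k l
        refine Fin.cases ?_ (fun m => ?_) k
        · simp
        · have hm : a m ≠ j := fun h => (Fin.cons_injective_iff.mp ha).1 ⟨m, h⟩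
          simp [hm]
      rw [sum_eps_vecCons_mul_prod r fun m => A (a m), hrows, det_submatrix_id_eq_eps_mul,
        ← mul_assoc, eps_mul_self_of_injective ha, one_mul, adjugate_apply]
    · rw [eps_eq_zero_of_not_injective ha, zero_mul]
  simp_rw [key]
  rw [← Finset.sum_filter, Finset.sum_const, ← Fintype.card_subtype, card_injective_vecCons,
    nsmul_eq_mul]
end

section
/- (Schouten identity.) Let R be a commutative ring and D ∈ ℕ. For every A : Fin D → R, every μ : Fin D → Fin D, and every ν : Fin D: ε(μ) · A ν = ∑_{r : Fin D} ε(Function.update μ r ν) · A (μ r). (Equivalently, antisymmetrizing a Levi-Civita symbol together with one extra index over D+1 indices in dimension D gives zero: ε_{[μ₁⋯μ_D} A_{μ]} = 0.) -/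
/-- The adjugate entries of the matrix defining `eps R μ` are the symbols with one replaced index. -/
theorem adjugate_eps_matrix (R : Type*) [CommRing R] {D : ℕ} (μ : Fin D → Fin D) (ν r : Fin D) :
    (Matrix.of fun a b => if μ a = b then (1 : R) else 0).adjugate ν r =
      eps R (Function.update μ r ν) := by
  rw [Matrix.adjugate_apply, eps]
  congr 1
  ext a b
  by_cases h : a = r
  · subst h
    simp [Pi.single_apply, eq_comm]
  · simp [h]

/-- Schouten identity: `ε(μ) · A ν = ∑ r, ε(μ with slot r replaced by ν) · A (μ r)`;
equivalently, antisymmetrizing a Levi-Civita symbol together with one extra index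
over `D + 1` indices in dimension `D` gives zero. -/
theorem schouten_identity (R : Type*) [CommRing R] (D : ℕ)
    (A : Fin D → R) (μ : Fin D → Fin D) (ν : Fin D) :
    eps R μ * A ν = ∑ r : Fin D, eps R (Function.update μ r ν) * A (μ r) := by
  have h := congrFun (congrArg (Matrix.mulVec · A)
    (Matrix.adjugate_mul (Matrix.of fun a b => if μ a = b then (1 : R) else 0))) ν
  simp only [← Matrix.mulVec_mulVec, Matrix.smul_mulVec, Matrix.one_mulVec, Pi.smul_apply,
    smul_eq_mul] at h
  rw [eps, ← h, Matrix.mulVec_eq_sum, Finset.sum_apply]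
  refine Finset.sum_congr rfl fun r _ => ?_
  rw [← adjugate_eps_matrix]
  simp [Matrix.mulVec, dotProduct, mul_comm]
end

section
/- (Tangentiality of the constrained Hodge dual.) Let D, p, q ∈ ℕ with D = p + q and q ≥ 1, let g : Matrix (Fin D) (Fin D) ℝ be symmetric and invertible with inverse g⁻¹, and let x : Fin D → ℝ. Then for every i : Fin p → Fin D, every slot s : Fin p, and every J : Fin (q−1) → Fin D: ∑_{ℓ : Fin D} ∑_{j : Fin D} ∑_{k : Fin p → Fin D} x ℓ · (∑_{c : Fin D} g⁻¹ j c · x c) · ε((j ::ᵥ J) ⊕ k) · ∏_{a : Fin p} g⁻¹ ((Function.update i s ℓ) a) (k a) = 0. This expresses that the proposed constrained Hodge dual with projection vector V = g⁻¹x annihilates the combination ∑_ℓ x^ℓ dx^ℓ inserted in any slot of the p-form, as required by the constraint x^i x^i = 1. -/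
/-- The Levi-Civita symbol picks up the sign of a permutation of its slots. -/
theorem eps_comp_perm (R : Type*) [CommRing R] {D : ℕ} (i : Fin D → Fin D)
    (σ : Equiv.Perm (Fin D)) :
    eps R (i ∘ σ) = (Equiv.Perm.sign σ : ℤ) * eps R i :=
  Matrix.det_permute σ (Matrix.of fun a b => if i a = b then (1 : R) else 0)

/-- Exchanging the head of the first block with slot `s` of the second block amounts to a
transposition of the concatenated tuple. -/
theorem append_cons_comp_swap {α : Type*} {p q : ℕ} (j : α) (J : Fin q → α) (k : Fin p → α)
    (s : Fin p) :
    (Fin.append (Fin.cons (k s) J : Fin (q + 1) → α) (Function.update k s j)) =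
      Fin.append (Fin.cons j J : Fin (q + 1) → α) k ∘
        Equiv.swap (Fin.castAdd p 0) (Fin.natAdd (q + 1) s) := by
  funext a
  refine Fin.addCases (fun b => ?_) (fun b => ?_) a
  · refine Fin.cases ?_ (fun c => ?_) b
    · simp
    · have h₁ : Fin.castAdd p c.succ ≠ Fin.castAdd p 0 := by simp [Fin.ext_iff]
      have h₂ : Fin.castAdd p c.succ ≠ Fin.natAdd (q + 1) s := by
        simp only [ne_eq, Fin.ext_iff, Fin.val_castAdd, Fin.val_natAdd, Fin.val_succ]
        omega
      rw [Function.comp_apply, Equiv.swap_apply_of_ne_of_ne h₁ h₂]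
      simp
  · by_cases hb : b = s
    · subst hb
      rw [Function.comp_apply, Equiv.swap_apply_right, Fin.append_right, Fin.append_left]
      simp
    · have h₁ : Fin.natAdd (q + 1) b ≠ Fin.castAdd p 0 := by simp [Fin.ext_iff]
      have h₂ : Fin.natAdd (q + 1) b ≠ Fin.natAdd (q + 1) s := by
        simpa [Fin.ext_iff] using hb
      rw [Function.comp_apply, Equiv.swap_apply_of_ne_of_ne h₁ h₂]
      simp [hb]

/-- The Levi-Civita symbol changes sign when two of its slots in different blocks are exchanged. -/
theorem eps_append_cons_update (R : Type*) [CommRing R] {p q : ℕ} (j : Fin (q + 1 + p))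
    (J : Fin q → Fin (q + 1 + p)) (k : Fin p → Fin (q + 1 + p)) (s : Fin p) :
    eps R (Fin.append (Fin.cons (k s) J) (Function.update k s j)) =
      -eps R (Fin.append (Fin.cons j J) k) := by
  have h : Fin.castAdd p (0 : Fin (q + 1)) ≠ Fin.natAdd (q + 1) s := by
    simp only [ne_eq, Fin.ext_iff, Fin.val_castAdd, Fin.val_natAdd, Fin.val_zero]
    omega
  rw [append_cons_comp_swap, eps_comp_perm, Equiv.Perm.sign_swap h]
  simp

/-- Contracting slot `s` of a product of matrix entries with a vector. -/
theorem sum_mul_prod_update {R m n ι : Type*} [CommRing R] [Fintype m] [Fintype ι]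
    [DecidableEq ι] (A : Matrix m n R) (x : m → R) (i : ι → m) (k : ι → n) (s : ι) :
    ∑ l, x l * ∏ a, A (Function.update i s l a) (k a) =
      (∑ l, x l * A l (k s)) * ∏ a ∈ Finset.univ.erase s, A (i a) (k a) := by
  rw [Finset.sum_mul]
  refine Finset.sum_congr rfl fun l _ => ?_
  rw [← Finset.mul_prod_erase Finset.univ _ (Finset.mem_univ s), Function.update_self, mul_assoc]
  congr 2
  refine Finset.prod_congr rfl fun a ha => ?_
  rw [Function.update_of_ne (Finset.ne_of_mem_erase ha)]

/-- Exchanging a value with the value of a function at `s`, as an involution on pairs. -/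
def exchangeAt {ι α : Type*} [DecidableEq ι] (s : ι) : Equiv.Perm (α × (ι → α)) :=
  Function.Involutive.toPerm (fun y => (y.2 s, Function.update y.2 s y.1)) fun y => by simp

theorem exchangeAt_apply {ι α : Type*} [DecidableEq ι] (s : ι) (y : α × (ι → α)) :
    exchangeAt s y = (y.2 s, Function.update y.2 s y.1) :=
  rfl

/-- The contraction of the Levi-Civita symbol with the same vector in two slots vanishes. -/
theorem sum_eps_append_cons_eq_zero {p q : ℕ} (V : Fin (q + 1 + p) → ℝ)
    (A : Matrix (Fin (q + 1 + p)) (Fin (q + 1 + p)) ℝ)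
    (i : Fin p → Fin (q + 1 + p)) (s : Fin p) (J : Fin q → Fin (q + 1 + p)) :
    ∑ y : Fin (q + 1 + p) × (Fin p → Fin (q + 1 + p)),
      V y.1 * eps ℝ (Fin.append (Fin.cons y.1 J) y.2) *
        (V (y.2 s) * ∏ a ∈ Finset.univ.erase s, A (i a) (y.2 a)) = 0 := by
  rw [← self_eq_neg, ← Finset.sum_neg_distrib]
  refine (Equiv.sum_comp (exchangeAt s) _).symm.trans (Finset.sum_congr rfl fun y _ => ?_)
  have hprod : ∏ a ∈ Finset.univ.erase s, A (i a) (Function.update y.2 s y.1 a) =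
      ∏ a ∈ Finset.univ.erase s, A (i a) (y.2 a) :=
    Finset.prod_congr rfl fun a ha => by rw [Function.update_of_ne (Finset.ne_of_mem_erase ha)]
  simp only [exchangeAt_apply, eps_append_cons_update, hprod, Function.update_self]
  ring

/-- Tangentiality of the constrained Hodge dual: in dimension `D = p + (q+1)`
(written `q + 1 + p` to match the index block structure, with `q` playing the role
of `q - 1`), the proposed constrained Hodge dual with projection vector `V = g⁻¹ x`
annihilates the combination `∑ ℓ, x ℓ dx^ℓ` inserted in any slot `s` of the
`p`-form, as required by the constraint `xⁱ xⁱ = 1`. -/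
theorem constrained_hodge_tangential (p q : ℕ)
    (g : Matrix (Fin (q + 1 + p)) (Fin (q + 1 + p)) ℝ)
    (hsymm : g.IsSymm) (hg : IsUnit g.det)
    (x : Fin (q + 1 + p) → ℝ)
    (i : Fin p → Fin (q + 1 + p)) (s : Fin p) (J : Fin q → Fin (q + 1 + p)) :
    ∑ ℓ : Fin (q + 1 + p), ∑ j : Fin (q + 1 + p), ∑ k : Fin p → Fin (q + 1 + p),
        x ℓ * (∑ c : Fin (q + 1 + p), g⁻¹ j c * x c)
          * eps ℝ (Fin.append (Fin.cons j J) k)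
          * ∏ a : Fin p, g⁻¹ (Function.update i s ℓ a) (k a) = 0 := by
  have hV : ∀ j, ∑ l, x l * g⁻¹ l j = ∑ c, g⁻¹ j c * x c := fun j =>
    Finset.sum_congr rfl fun c _ => by
      rw [mul_comm, ← hsymm.inv.apply c j]
  rw [← sum_eps_append_cons_eq_zero (fun j => ∑ c, g⁻¹ j c * x c) g⁻¹ i s J,
    Fintype.sum_prod_type, Finset.sum_comm]
  refine Finset.sum_congr rfl fun j _ => ?_
  rw [Finset.sum_comm]
  refine Finset.sum_congr rfl fun k _ => ?_
  rw [← hV (k s), ← sum_mul_prod_update, Finset.mul_sum]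
  exact Finset.sum_congr rfl fun l _ => by ring
end
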